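/- arXiv:1312.6549 — 7 statements merged into one kernel-verified Lean document; each statement's English description precedes it below -/
import Mathlib

section
/- Let n ≥ 1 and let N be an integer of bit length n, i.e., 2^(n-1) ≤ N < 2^n, and let x be an integer with 0 ≤ x < 2^(2n). Define the true quotient Q = ⌊x/N⌋ and the Barrett estimated quotient Q̂ = ⌊(⌊x/2^n⌋ · ⌊2^(2n)/N⌋)/2^n⌋. Then Q − 3 ≤ Q̂ ≤ Q. -/
/-!
Write `B = 2 ^ n`, `x = a B + r`, `B² = m N + s` and `a m = q B + t` for the three divisions with
remainder, so that `q` is the Barrett estimate. Then `a B² = q B N + t N + a s`.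

* Since `t N + a s ≥ 0`, cancelling `B` gives `q N ≤ a B ≤ x`.
* Since `t < B`, `a < B` and `s < N`, the error `t N + a s` is less than `2 B N`, whence
  `a B < (q + 2) N`. The hypothesis on the bit length gives `r < B ≤ 2 N`, so `x < (q + 4) N`.
-/

/-- **Barrett quotient estimate.**
Let `n ≥ 1`, let `N` be an integer of bit length `n` (i.e. `2^(n-1) ≤ N < 2^n`),
and let `x` be an integer with `0 ≤ x < 2^(2n)`.  With the true quotient
`Q = ⌊x/N⌋` and the Barrett estimated quotient
`Q̂ = ⌊(⌊x/2^n⌋ · ⌊2^(2n)/N⌋)/2^n⌋`, we have `Q − 3 ≤ Q̂ ≤ Q`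
(stated as `Q̂ ≤ Q` and `Q ≤ Q̂ + 3`).  All divisions are floor divisions. -/
theorem barrett_quotient_estimate (n N x : ℕ) (hn : 1 ≤ n)
    (hN₁ : 2 ^ (n - 1) ≤ N) (hN₂ : N < 2 ^ n) (hx : x < 2 ^ (2 * n)) :
    (x / 2 ^ n * (2 ^ (2 * n) / N)) / 2 ^ n ≤ x / N ∧
      x / N ≤ (x / 2 ^ n * (2 ^ (2 * n) / N)) / 2 ^ n + 3 := by
  have hB : 2 ^ n ≤ 2 * N := by
    obtain ⟨k, rfl⟩ := Nat.exists_eq_add_of_le' hn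
    rw [Nat.add_sub_cancel] at hN₁
    rw [pow_succ]
    omega
  have hBpos : 0 < 2 ^ n := by positivity
  have hsq : 2 ^ (2 * n) = 2 ^ n * 2 ^ n := by rw [two_mul, pow_add]
  rw [hsq] at hx ⊢
  generalize 2 ^ n = B at *
  have hNpos : 0 < N := by omega
  have ha : x / B < B := Nat.div_lt_of_lt_mul hx
  have hxe := Nat.div_add_mod x B
  have hr := Nat.mod_lt x hBpos
  have hme := Nat.div_add_mod (B * B) N
  have hs := Nat.mod_lt (B * B) hNpos
  have hqe := Nat.div_add_mod (x / B * (B * B / N)) B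
  have ht := Nat.mod_lt (x / B * (B * B / N)) hBpos
  generalize x / B * (B * B / N) / B = q at *
  generalize x / B * (B * B / N) % B = t at *
  generalize x / B = a at *
  generalize x % B = r at *
  generalize B * B / N = m at *
  generalize B * B % N = s at *
  have key : B * (a * B) = B * (q * N) + (t * N + a * s) := by
    linear_combination a * hme.symm + N * hqe.symm
  constructor
  · rw [Nat.le_div_iff_mul_le hNpos]
    have : q * N ≤ a * B := Nat.le_of_mul_le_mul_left (by omega) hBpos
    linarith
  · have herr : t * N + a * s < B * (2 * N) := by
      have h₁ : t * N < B * N := Nat.mul_lt_mul_of_pos_right ht hNpos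
      have h₂ : a * s ≤ B * N := Nat.mul_le_mul ha.le hs.le
      linarith
    have haB : a * B < q * N + 2 * N :=
      Nat.lt_of_mul_lt_mul_left (a := B) (by rw [mul_add]; omega)
    have hlt : x / N < q + 4 := by
      rw [Nat.div_lt_iff_lt_mul hNpos]
      linarith
    omega
end

section
/- Let n ≥ 1, let N be an integer of bit length n, i.e., 2^(n-1) ≤ N < 2^n, and let x be an integer with 0 ≤ x < 2^(2n). With Q̂ = ⌊(⌊x/2^n⌋ · ⌊2^(2n)/N⌋)/2^n⌋, the value x − Q̂·N satisfies 0 ≤ x − Q̂·N < 4·N and x − Q̂·N ≡ x (mod N). Consequently the Barrett correction loop, which repeatedly subtracts N while the current value is ≥ N, terminates after at most three subtractions and outputs x mod N. -/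
/-!
Put `B = 2 ^ n` and perform the three divisions with remainder: `x = h * B + l`,
`B ^ 2 = m * N + r` and `h * m = q * B + s`, so that `q` is the Barrett quotient. Eliminating `m`
gives the exact error formula `B * (x - q * N) = B * l + h * r + s * N`. Its right-hand side is
nonnegative, and since `l, h, s < B` and `r < N` it is less than `B * (B + 2 * N)`. As `N` has
exactly `n` bits, `B ≤ 2 * N`, so `0 ≤ x - q * N < 4 * N`.
-/

/-- The Barrett error bound for an arbitrary base `B` in place of `2 ^ n`; only `N > 0` and
`x < B ^ 2` are needed. -/
theorem barrett_error_bound (B N x : ℕ) (hN : 0 < N) (hx : x < B * B) :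
    x / B * (B * B / N) / B * N ≤ x ∧
      x < x / B * (B * B / N) / B * N + (B + 2 * N) := by
  have hB : 0 < B := by
    by_contra h
    obtain rfl : B = 0 := by omega
    simp at hx
  have hh : x / B < B := Nat.div_lt_of_lt_mul hx
  have hl := Nat.mod_lt x hB
  have hr := Nat.mod_lt (B * B) hN
  have hs := Nat.mod_lt (x / B * (B * B / N)) hB
  have e1 := Nat.div_add_mod x B
  have e2 := Nat.div_add_mod (B * B) N
  have e3 := Nat.div_add_mod (x / B * (B * B / N)) B
  generalize x / B * (B * B / N) / B = q at *
  generalize x / B * (B * B / N) % B = s at *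
  generalize B * B / N = m at *
  generalize B * B % N = r at *
  generalize x / B = h at *
  generalize x % B = l at *
  have key : B * x = B * (q * N) + (B * l + h * r + s * N) := by
    zify at e1 e2 e3 ⊢
    linear_combination (-B : ℤ) * e1 - h * e2 - N * e3
  constructor
  · exact Nat.le_of_mul_le_mul_left (by omega) hB
  · have b1 : B * l < B * B := Nat.mul_lt_mul_of_pos_left hl hB
    have b2 : h * r ≤ B * N := Nat.mul_le_mul hh.le hr.le
    have b3 : s * N ≤ B * N := Nat.mul_le_mul_right N hs.le
    refine Nat.lt_of_mul_lt_mul_left (a := B) ?_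
    linarith


/-- **Correctness of Barrett modular reduction.**
Let `n ≥ 1`, let `N` be an integer of bit length `n` (i.e. `2^(n-1) ≤ N < 2^n`),
and let `x` satisfy `0 ≤ x < 2^(2n)`.  With the Barrett estimated quotient
`Q̂ = ⌊(⌊x/2^n⌋ · ⌊2^(2n)/N⌋)/2^n⌋`, the value `x − Q̂·N` satisfies
`0 ≤ x − Q̂·N < 4·N` (here: `Q̂·N ≤ x` and `x − Q̂·N < 4·N`) and
`x − Q̂·N ≡ x (mod N)`.  Consequently the correction loop, which repeatedly
subtracts `N` while the current value is `≥ N`, terminates after at most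
three subtractions and outputs `x mod N`: there is `k ≤ 3` with
`x − Q̂·N = (x mod N) + k·N`. -/
theorem barrett_reduction_correct (n N x : ℕ) (hn : 1 ≤ n)
    (hN₁ : 2 ^ (n - 1) ≤ N) (hN₂ : N < 2 ^ n) (hx : x < 2 ^ (2 * n)) :
    (x / 2 ^ n * (2 ^ (2 * n) / N)) / 2 ^ n * N ≤ x ∧
      x - (x / 2 ^ n * (2 ^ (2 * n) / N)) / 2 ^ n * N < 4 * N ∧
      (x - (x / 2 ^ n * (2 ^ (2 * n) / N)) / 2 ^ n * N) % N = x % N ∧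
      ∃ k ≤ 3, x - (x / 2 ^ n * (2 ^ (2 * n) / N)) / 2 ^ n * N = x % N + k * N := by
  have hpow : 2 ^ n = 2 * 2 ^ (n - 1) := by
    rw [← pow_succ', Nat.sub_add_cancel hn]
  have hN : 0 < N := lt_of_lt_of_le (by positivity) hN₁
  have hsq : 2 ^ (2 * n) = 2 ^ n * 2 ^ n := by rw [two_mul, pow_add]
  rw [hsq] at hx ⊢
  obtain ⟨hle, hlt⟩ := barrett_error_bound (2 ^ n) N x hN hx
  generalize x / 2 ^ n * (2 ^ n * 2 ^ n / N) / 2 ^ n = q at *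
  have hlt4 : x - q * N < 4 * N := by omega
  have hmod : (x - q * N) % N = x % N := by
    conv_rhs => rw [← Nat.sub_add_cancel hle, Nat.add_mul_mod_self_right]
  refine ⟨hle, hlt4, hmod, (x - q * N) / N, ?_, ?_⟩
  · have : (x - q * N) / N < 4 := (Nat.div_lt_iff_lt_mul hN).2 hlt4
    omega
  · rw [← hmod, Nat.mod_add_div']
end

section
/- Let n and m be integers with 1 ≤ n ≤ m, let N be an integer of bit length n, i.e., 2^(n-1) ≤ N < 2^n, and let x be an integer with 0 ≤ x < 2^m. Define Q = ⌊x/N⌋ and the modified Barrett estimated quotient Q̂ = ⌊(⌊x/2^n⌋ · ⌊2^(m+n)/N⌋)/2^m⌋. Then Q − 3 ≤ Q̂ ≤ Q; in particular 0 ≤ x − Q̂·N < 4·N and x − Q̂·N ≡ x (mod N), so the correction loop subtracting N while the value is ≥ N terminates and yields x mod N. -/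
/-!
Write `A = 2 ^ n`, `B = 2 ^ m`, `a = ⌊x / A⌋`, `μ = ⌊A * B / N⌋` and `q = ⌊a * μ / B⌋`. Everything
follows from `q * N ≤ x < (q + 4) * N`, which is checked after multiplication by `B`.
All three floors round down, so `q * N * B ≤ a * μ * N ≤ a * A * B ≤ x * B`. Conversely,
undoing the roundings one at a time costs at most
`A * B` for `a`, `a * N` for `μ` and `N * B` for `q`; since `A ≤ 2 * N` (the bit length of `N`
is `n`) and `a ≤ x ≤ B`, the total cost is at most `4 * N * B`.
-/

/-- The estimate never exceeds the true quotient; this holds for arbitrary positive `B`. -/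
lemma barrett_estimate_mul_le (A B N x : ℕ) (hB : 0 < B) :
    (x / A * (B * A / N)) / B * N ≤ x := by
  have h1 := Nat.div_mul_le_self x A
  have h2 := Nat.div_mul_le_self (B * A) N
  have h3 := Nat.div_mul_le_self (x / A * (B * A / N)) B
  generalize (x / A * (B * A / N)) / B = q at *
  generalize x / A = a at *
  generalize B * A / N = μ at *
  refine Nat.le_of_mul_le_mul_right ?_ hB
  calc q * N * B = q * B * N := by ring
    _ ≤ a * μ * N := Nat.mul_le_mul_right N h3
    _ = a * (μ * N) := by ring
    _ ≤ a * (B * A) := Nat.mul_le_mul_left a h2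
    _ = a * A * B := by ring
    _ ≤ x * B := Nat.mul_le_mul_right B h1

/-- The estimate falls short of the true quotient by at most three. -/
lemma lt_barrett_estimate_add_four_mul (A B N x : ℕ) (hA : 0 < A) (hB : 0 < B) (hN : 0 < N)
    (hAN : A ≤ 2 * N) (hx : x ≤ B) :
    x < ((x / A * (B * A / N)) / B + 4) * N := by
  have h0 : x / A ≤ B := (Nat.div_le_self x A).trans hx
  have h1 := Nat.lt_mul_div_succ x hA
  have h2 := (Nat.lt_mul_div_succ (B * A) hN).le
  have h3 := (Nat.lt_mul_div_succ (x / A * (B * A / N)) hB).le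
  generalize (x / A * (B * A / N)) / B = q at *
  generalize x / A = a at *
  generalize B * A / N = μ at *
  refine Nat.lt_of_mul_lt_mul_right (a := B) ?_
  calc x * B < A * (a + 1) * B := Nat.mul_lt_mul_of_pos_right h1 hB
    _ = a * (B * A) + A * B := by ring
    _ ≤ a * (N * (μ + 1)) + 2 * N * B := by gcongr
    _ = N * (a * μ) + a * N + 2 * N * B := by ring
    _ ≤ N * (B * (q + 1)) + B * N + 2 * N * B := by gcongr
    _ = (q + 4) * N * B := by ring

/-- **Correctness of the modified Barrett algorithm.**
Let `1 ≤ n ≤ m`, let `N` be an integer of bit length `n`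
(i.e. `2^(n-1) ≤ N < 2^n`), and let `x` satisfy `0 ≤ x < 2^m`.
With `Q = ⌊x/N⌋` and the modified Barrett estimated quotient
`Q̂ = ⌊(⌊x/2^n⌋ · ⌊2^(m+n)/N⌋)/2^m⌋`, we have `Q − 3 ≤ Q̂ ≤ Q`
(stated as `Q̂ ≤ Q` and `Q ≤ Q̂ + 3`); in particular `0 ≤ x − Q̂·N < 4·N`
(here: `Q̂·N ≤ x` and `x − Q̂·N < 4·N`) and `x − Q̂·N ≡ x (mod N)`, so the
correction loop subtracting `N` while the value is `≥ N` terminates and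
yields `x mod N`: there is `k ≤ 3` with `x − Q̂·N = (x mod N) + k·N`. -/
theorem modified_barrett_correct (n m N x : ℕ) (hn : 1 ≤ n) (hnm : n ≤ m)
    (hN₁ : 2 ^ (n - 1) ≤ N) (hN₂ : N < 2 ^ n) (hx : x < 2 ^ m) :
    (x / 2 ^ n * (2 ^ (m + n) / N)) / 2 ^ m ≤ x / N ∧
      x / N ≤ (x / 2 ^ n * (2 ^ (m + n) / N)) / 2 ^ m + 3 ∧
      (x / 2 ^ n * (2 ^ (m + n) / N)) / 2 ^ m * N ≤ x ∧
      x - (x / 2 ^ n * (2 ^ (m + n) / N)) / 2 ^ m * N < 4 * N ∧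
      (x - (x / 2 ^ n * (2 ^ (m + n) / N)) / 2 ^ m * N) % N = x % N ∧
      ∃ k ≤ 3, x - (x / 2 ^ n * (2 ^ (m + n) / N)) / 2 ^ m * N = x % N + k * N := by
  have hAN : 2 ^ n ≤ 2 * N := by
    calc 2 ^ n = 2 * 2 ^ (n - 1) := by rw [← pow_succ', Nat.sub_add_cancel hn]
      _ ≤ 2 * N := Nat.mul_le_mul_left 2 hN₁
  have hN : 0 < N := lt_of_lt_of_le (by positivity) hN₁
  have hlow := barrett_estimate_mul_le (2 ^ n) (2 ^ m) N x (by positivity)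
  have hupp := lt_barrett_estimate_add_four_mul (2 ^ n) (2 ^ m) N x (by positivity)
    (by positivity) hN hAN hx.le
  rw [← pow_add] at hlow hupp
  generalize (x / 2 ^ n * (2 ^ (m + n) / N)) / 2 ^ m = q at *
  have hle : q ≤ x / N := (Nat.le_div_iff_mul_le hN).2 hlow
  have hlt : x / N < q + 4 := (Nat.div_lt_iff_lt_mul hN).2 hupp
  have hmod : x - q * N = x % N + (x / N - q) * N := by
    have hdiv := Nat.mod_add_div' x N
    have hsplit : (x / N - q) * N + q * N = x / N * N := by
      rw [← add_mul, Nat.sub_add_cancel hle]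
    omega
  refine ⟨hle, by omega, hlow, ?_, ?_, x / N - q, by omega, hmod⟩
  · rw [add_mul] at hupp
    omega
  · rw [hmod, Nat.add_mul_mod_self_right, Nat.mod_mod]
end

section
/- Let n be an even positive integer, let N be a positive integer with N < 2^n, and let x be an integer with 0 ≤ x < 2^(2n). Write x = x₁·2^(3n/2) + x₂·2^n + x₃ where x₁ = ⌊x/2^(3n/2)⌋, x₂ = ⌊x/2^n⌋ mod 2^(n/2) and x₃ = x mod 2^n (so x₁, x₂ < 2^(n/2) and x₃ < 2^n). Let R = 2^(3n/2) mod N and set C = x₁·R + x₂·2^n + x₃. Then C ≡ x (mod N) and C < 2^((3n/2)+2). -/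
/-!
With `n = 2k` and `a = 2^k`, the three powers involved are `2^n = a²`, `2^(3n/2) = a³` and
`2^(2n) = a⁴`. The decomposition of `x` is division with remainder by `a²` and then by `a`.
The congruence holds because replacing `a³` by its residue `R` modulo `N` does not change
`x₁·a³` modulo `N`. For the bound, `x₁·R < a·a²` and `x₂·a² + x₃ < a·a²`, so
`C < 2a³`, which is even one bit better than claimed.
-/

/-- **Correctness of the paper's first modular-reduction method.**
Let `n` be an even positive integer, `N` a positive integer with `N < 2^n`,
and `x` an integer with `0 ≤ x < 2^(2n)`.  Write
`x = x₁·2^(3n/2) + x₂·2^n + x₃` where `x₁ = ⌊x/2^(3n/2)⌋`,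
`x₂ = ⌊x/2^n⌋ mod 2^(n/2)` and `x₃ = x mod 2^n`
(so `x₁, x₂ < 2^(n/2)` and `x₃ < 2^n`).  Let `R = 2^(3n/2) mod N` and set
`C = x₁·R + x₂·2^n + x₃`.  Then `C ≡ x (mod N)` and `C < 2^(3n/2 + 2)`. -/
theorem first_method_correct (n N x : ℕ) (hn : 0 < n) (hev : 2 ∣ n)
    (hN : 0 < N) (hN₂ : N < 2 ^ n) (hx : x < 2 ^ (2 * n))
    (x₁ x₂ x₃ R C : ℕ)
    (hx₁ : x₁ = x / 2 ^ (3 * n / 2))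
    (hx₂ : x₂ = (x / 2 ^ n) % 2 ^ (n / 2))
    (hx₃ : x₃ = x % 2 ^ n)
    (hR : R = 2 ^ (3 * n / 2) % N)
    (hC : C = x₁ * R + x₂ * 2 ^ n + x₃) :
    x = x₁ * 2 ^ (3 * n / 2) + x₂ * 2 ^ n + x₃ ∧
      x₁ < 2 ^ (n / 2) ∧ x₂ < 2 ^ (n / 2) ∧ x₃ < 2 ^ n ∧
      C % N = x % N ∧ C < 2 ^ (3 * n / 2 + 2) := by
  obtain ⟨k, rfl⟩ := hev
  have e1 : 3 * (2 * k) / 2 = 3 * k := by omega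
  have e2 : 2 * k / 2 = k := by omega
  rw [e1] at hx₁ hR
  rw [e2] at hx₂
  rw [e1, e2]
  have p2 : 2 ^ (2 * k) = 2 ^ k * 2 ^ k := by ring
  have p3 : 2 ^ (3 * k) = 2 ^ k * 2 ^ k * 2 ^ k := by ring
  have p4 : 2 ^ (2 * (2 * k)) = 2 ^ k * (2 ^ k * 2 ^ k * 2 ^ k) := by ring
  have ha : 0 < 2 ^ k := by positivity
  rw [pow_add, p2, p3]
  rw [p2] at hN₂ hx₂ hx₃ hC
  rw [p3] at hx₁ hR
  rw [p4] at hx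
  generalize 2 ^ k = a at *
  have hdecomp : x = x₁ * (a * a * a) + x₂ * (a * a) + x₃ := by
    have h1 := Nat.div_add_mod x (a * a)
    have h2 := Nat.div_add_mod (x / (a * a)) a
    rw [Nat.div_div_eq_div_mul, ← hx₁, ← hx₂] at h2
    rw [← hx₃, ← h2] at h1
    rw [← h1]
    ring
  have b1 : x₁ < a := by
    rw [hx₁]
    exact Nat.div_lt_of_lt_mul (by rwa [mul_comm])
  have b2 : x₂ < a := hx₂ ▸ Nat.mod_lt _ ha
  have b3 : x₃ < a * a := hx₃ ▸ Nat.mod_lt _ (by positivity)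
  have hRN : R < N := hR ▸ Nat.mod_lt _ hN
  refine ⟨hdecomp, b1, b2, b3, ?_, ?_⟩
  · have hmod : R ≡ a * a * a [MOD N] := hR ▸ Nat.mod_modEq _ _
    have h : C ≡ x [MOD N] := by
      rw [hC, hdecomp]
      exact ((hmod.mul_left x₁).add_right _).add_right _
    exact h
  · have h1 : x₁ * R ≤ a * (a * a) := Nat.mul_le_mul b1.le (by omega)
    have h2 : (x₂ + 1) * (a * a) ≤ a * (a * a) := Nat.mul_le_mul_right _ b2
    rw [hC]
    nlinarith
end

section
/- Let n be a positive integer divisible by 3, let N be a positive integer with N < 2^n, and let x be an integer with 0 ≤ x < 2^(2n). Write x = x₁·2^(5n/3) + x₂·2^(4n/3) + x₃ where x₁ = ⌊x/2^(5n/3)⌋, x₂ = ⌊x/2^(4n/3)⌋ mod 2^(n/3) and x₃ = x mod 2^(4n/3) (so x₁, x₂ < 2^(n/3) and x₃ < 2^(4n/3)). Let R₁ = 2^(5n/3) mod N and R₂ = 2^(4n/3) mod N, and set C = x₁·R₁ + x₂·R₂ + x₃. Then C ≡ x (mod N) and C < 3·2^(4n/3), hence C < 2^((4n/3)+2). -/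
/-!
Write `n = 3k` and `b = 2^k`, so that `N < b^3` and `x < b^6`. Dividing `x` by `b^4`, and the quotient
by `b`, gives `x = x₁ b^5 + x₂ b^4 + x₃` with `x₁, x₂ < b` and `x₃ < b^4`. Replacing the powers `b^5`
and `b^4` by their residues modulo `N` does not change the sum modulo `N`, and since these residues
are below `b^3`, each of the three terms of `C` is below `b^4`.
-/


/-- **Correctness of the paper's second modular-reduction method.**
Let `n` be a positive integer divisible by `3`, `N` a positive integer with
`N < 2^n`, and `x` an integer with `0 ≤ x < 2^(2n)`.  Write
`x = x₁·2^(5n/3) + x₂·2^(4n/3) + x₃` where `x₁ = ⌊x/2^(5n/3)⌋`,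
`x₂ = ⌊x/2^(4n/3)⌋ mod 2^(n/3)` and `x₃ = x mod 2^(4n/3)`
(so `x₁, x₂ < 2^(n/3)` and `x₃ < 2^(4n/3)`).  Let `R₁ = 2^(5n/3) mod N` and
`R₂ = 2^(4n/3) mod N`, and set `C = x₁·R₁ + x₂·R₂ + x₃`.  Then
`C ≡ x (mod N)` and `C < 3·2^(4n/3)`, hence `C < 2^(4n/3 + 2)`. -/
theorem second_method_correct (n N x : ℕ) (hn : 0 < n) (hdvd : 3 ∣ n)
    (hN : 0 < N) (hN₂ : N < 2 ^ n) (hx : x < 2 ^ (2 * n))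
    (x₁ x₂ x₃ R₁ R₂ C : ℕ)
    (hx₁ : x₁ = x / 2 ^ (5 * n / 3))
    (hx₂ : x₂ = (x / 2 ^ (4 * n / 3)) % 2 ^ (n / 3))
    (hx₃ : x₃ = x % 2 ^ (4 * n / 3))
    (hR₁ : R₁ = 2 ^ (5 * n / 3) % N)
    (hR₂ : R₂ = 2 ^ (4 * n / 3) % N)
    (hC : C = x₁ * R₁ + x₂ * R₂ + x₃) :
    x = x₁ * 2 ^ (5 * n / 3) + x₂ * 2 ^ (4 * n / 3) + x₃ ∧
      x₁ < 2 ^ (n / 3) ∧ x₂ < 2 ^ (n / 3) ∧ x₃ < 2 ^ (4 * n / 3) ∧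
      C % N = x % N ∧ C < 3 * 2 ^ (4 * n / 3) ∧ C < 2 ^ (4 * n / 3 + 2) := by
  obtain ⟨k, rfl⟩ := hdvd
  have e5 : 5 * (3 * k) / 3 = 5 * k := by omega
  have e4 : 4 * (3 * k) / 3 = 4 * k := by omega
  have e1 : 3 * k / 3 = k := by omega
  rw [e5] at hx₁ hR₁ ⊢
  rw [e4] at hx₂ hx₃ hR₂ ⊢
  rw [e1] at hx₂ ⊢
  have hb : 0 < 2 ^ k := by positivity
  have p5 : 2 ^ (5 * k) = (2 ^ k) ^ 4 * 2 ^ k := by ring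
  have p4 : 2 ^ (4 * k) = (2 ^ k) ^ 4 := by ring
  have p3 : 2 ^ (3 * k) = (2 ^ k) ^ 3 := by ring
  have p6 : 2 ^ (2 * (3 * k)) = 2 ^ k * ((2 ^ k) ^ 4 * 2 ^ k) := by ring
  rw [p3] at hN₂
  rw [p6] at hx
  rw [pow_add, p4]
  rw [p4] at hx₂ hx₃ hR₂
  rw [p5] at hx₁ hR₁ ⊢
  generalize 2 ^ k = b at *
  have h₁ : x₁ < b := by
    rw [hx₁]
    exact Nat.div_lt_of_lt_mul (by rwa [mul_comm])
  have h₂ : x₂ < b := hx₂ ▸ Nat.mod_lt _ hb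
  have h₃ : x₃ < b ^ 4 := hx₃ ▸ Nat.mod_lt _ (by positivity)
  have hdec : x = x₁ * (b ^ 4 * b) + x₂ * b ^ 4 + x₃ := by
    have d₁ := Nat.div_add_mod x (b ^ 4)
    have d₂ := Nat.div_add_mod (x / b ^ 4) b
    rw [Nat.div_div_eq_div_mul, ← hx₁, ← hx₂] at d₂
    rw [← hx₃, ← d₂] at d₁
    rw [← d₁]
    ring
  have hmod : C ≡ x [MOD N] := by
    rw [hC, hdec, hR₁, hR₂]
    exact (((Nat.mod_modEq _ _).mul_left _).add ((Nat.mod_modEq _ _).mul_left _)).add_right _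
  -- A digit below `b` times a residue below `N < b ^ 3` stays below `b ^ 4`.
  have hterm : ∀ d m : ℕ, d < b → d * (m % N) < b ^ 4 := fun d m hd =>
    calc d * (m % N) < b * b ^ 3 := Nat.mul_lt_mul'' hd ((Nat.mod_lt m hN).trans hN₂)
      _ = b ^ 4 := by ring
  have t₁ := hterm x₁ (b ^ 4 * b) h₁
  have t₂ := hterm x₂ (b ^ 4) h₂
  rw [← hR₁] at t₁
  rw [← hR₂] at t₂
  exact ⟨hdec, h₁, h₂, h₃, hmod, by omega, by omega⟩
end

section
/- Define, for real k, D(k) = −k + 1/2 + (1/2)·√(2k² − 10k − 1 + 2(k+2)·√(k(k+2))). Then as k → ∞, D(k) − (1/(8k) − 1/(16k²) + 7/(128k³)) = o(1/k³); that is, the function k ↦ D(k) − 1/(8k) + 1/(16k²) − 7/(128k³) is little-o of k⁻³ at infinity. -/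
/-!
With `x = 1 / k` one has `D(k) = k * (v / 2 - 1 + x / 2)`, where
`v = √(2 - 10x - x² + 2(1 + 2x) u)` and `u = √(1 + 2x)`. For `0 < x ≤ 1/10` the Taylor
polynomials of degree `4` of `u` and of `v` both have error at most `x⁵`.
Both bounds follow by squaring: each comparison reduces to the nonnegativity of `x⁵ * q(x)` for
a polynomial `q` that is positive on `(0, 1/10]`. The error in `D(k)` is therefore at
most `1 / (2k⁴)`, which is `o(1 / k³)`.
-/

open Filter Asymptotics

/-- The degree ratio `D(k)` appearing in the Gröbner-basis complexity
estimate for random multivariate quadratic systems of `kn` equations in `n`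
unknowns:
`D(k) = −k + 1/2 + (1/2)·√(2k² − 10k − 1 + 2(k+2)·√(k(k+2)))`. -/
noncomputable def quadDegreeRatio (k : ℝ) : ℝ :=
  -k + 1 / 2 + (1 / 2) * Real.sqrt (2 * k ^ 2 - 10 * k - 1 +
    2 * (k + 2) * Real.sqrt (k * (k + 2)))

lemma sqrt_one_add_two_mul_bounds {x : ℝ} (hx : 0 < x) (hx' : x ≤ 1 / 10) :
    1 + x - x ^ 2 / 2 + x ^ 3 / 2 - 5 / 8 * x ^ 4 ≤ √(1 + 2 * x) ∧
      √(1 + 2 * x) ≤ 1 + x - x ^ 2 / 2 + x ^ 3 / 2 - 5 / 8 * x ^ 4 + x ^ 5 := by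
  have pow_le (n : ℕ) (hn : n ≠ 0) : x ^ n ≤ 1 / 10 :=
    (pow_le_of_le_one hx.le (by linarith) hn).trans hx'
  have h2 : x ^ 2 ≤ x := pow_le_of_le_one hx.le (by linarith) (by norm_num)
  have h3 := pow_le 3 (by norm_num)
  have h4 := pow_le 4 (by norm_num)
  have h5 := pow_le 5 (by norm_num)
  have p3 := pow_pos hx 3
  have p2 := pow_pos hx 2
  have p4 := pow_pos hx 4
  have p5 := pow_pos hx 5
  constructor
  · apply Real.le_sqrt_of_sq_le
    have hq : 0 ≤ x ^ 5 * (7 / 4 - 7 / 8 * x + 5 / 8 * x ^ 2 - 25 / 64 * x ^ 3) :=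
      mul_nonneg p5.le (by linarith)
    linarith
  · apply Real.sqrt_le_iff.mpr
    refine ⟨by linarith, ?_⟩
    have hq : 0 ≤ x ^ 5 * (1 / 4 + 23 / 8 * x - 13 / 8 * x ^ 2 + 89 / 64 * x ^ 3
        - 5 / 4 * x ^ 4 + x ^ 5) :=
      mul_nonneg p5.le (by linarith)
    linarith

/-- The rescaled outer square root, as a function of `x = 1 / k`, agrees with its Taylor
polynomial of degree `4` up to `x ^ 5`. -/
lemma abs_sqrt_sub_taylor_le {x : ℝ} (hx : 0 < x) (hx' : x ≤ 1 / 10) :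
    |√(2 - 10 * x - x ^ 2 + 2 * (1 + 2 * x) * √(1 + 2 * x)) -
      (2 - x + x ^ 2 / 4 - x ^ 3 / 8 + 7 / 64 * x ^ 4)| ≤ x ^ 5 := by
  obtain ⟨hl, hu⟩ := sqrt_one_add_two_mul_bounds hx hx'
  have pow_le (n : ℕ) (hn : n ≠ 0) : x ^ n ≤ 1 / 10 :=
    (pow_le_of_le_one hx.le (by linarith) hn).trans hx'
  have h3 := pow_le 3 (by norm_num)
  have h5 := pow_le 5 (by norm_num)
  have p2 := pow_pos hx 2
  have p3 := pow_pos hx 3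
  have p4 := pow_pos hx 4
  have p5 := pow_pos hx 5
  have hl' := mul_le_mul_of_nonneg_left hl (by linarith : 0 ≤ 2 * (1 + 2 * x))
  have hu' := mul_le_mul_of_nonneg_left hu (by linarith : 0 ≤ 2 * (1 + 2 * x))
  rw [abs_le]
  constructor
  · have : 2 - x + x ^ 2 / 4 - x ^ 3 / 8 + 7 / 64 * x ^ 4 - x ^ 5 ≤
        √(2 - 10 * x - x ^ 2 + 2 * (1 + 2 * x) * √(1 + 2 * x)) := by
      apply Real.le_sqrt_of_sq_le
      have hq : 0 ≤ x ^ 5 * (57 / 32 - 265 / 128 * x + 135 / 256 * x ^ 2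
          - 1073 / 4096 * x ^ 3 + 7 / 32 * x ^ 4 - x ^ 5) :=
        mul_nonneg p5.le (by linarith)
      linarith
    linarith
  · have : √(2 - 10 * x - x ^ 2 + 2 * (1 + 2 * x) * √(1 + 2 * x)) ≤
        2 - x + x ^ 2 / 4 - x ^ 3 / 8 + 7 / 64 * x ^ 4 + x ^ 5 := by
      apply Real.sqrt_le_iff.mpr
      refine ⟨by linarith, ?_⟩
      have hq : 0 ≤ x ^ 5 * (135 / 32 - 759 / 128 * x + 121 / 256 * x ^ 2
          - 975 / 4096 * x ^ 3 + 7 / 32 * x ^ 4 + x ^ 5) :=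
        mul_nonneg p5.le (by linarith)
      linarith
    linarith

lemma quadDegreeRatio_eq {k : ℝ} (hk : 0 < k) :
    quadDegreeRatio k = k * (√(2 - 10 * k⁻¹ - k⁻¹ ^ 2 +
      2 * (1 + 2 * k⁻¹) * √(1 + 2 * k⁻¹)) / 2 - 1 + k⁻¹ / 2) := by
  have inner : √(k * (k + 2)) = k * √(1 + 2 * k⁻¹) := by
    rw [show k * (k + 2) = k ^ 2 * (1 + 2 * k⁻¹) by field_simp,
      Real.sqrt_mul (sq_nonneg k), Real.sqrt_sq hk.le]
  have outer : 2 * k ^ 2 - 10 * k - 1 + 2 * (k + 2) * (k * √(1 + 2 * k⁻¹)) =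
      k ^ 2 * (2 - 10 * k⁻¹ - k⁻¹ ^ 2 + 2 * (1 + 2 * k⁻¹) * √(1 + 2 * k⁻¹)) := by
    generalize √(1 + 2 * k⁻¹) = u
    field_simp
  rw [quadDegreeRatio, inner, outer, Real.sqrt_mul (sq_nonneg k), Real.sqrt_sq hk.le]
  generalize √(2 - 10 * k⁻¹ - k⁻¹ ^ 2 + 2 * (1 + 2 * k⁻¹) * √(1 + 2 * k⁻¹)) = v
  field_simp
  ring

/-- **Asymptotic expansion of `D(k)` for large `k`.**
As `k → ∞`, `D(k) − (1/(8k) − 1/(16k²) + 7/(128k³)) = o(1/k³)`, i.e. the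
function `k ↦ D(k) − 1/(8k) + 1/(16k²) − 7/(128k³)` is little-o of `k⁻³`
at infinity. -/
theorem quadDegreeRatio_expansion :
    (fun k : ℝ => quadDegreeRatio k -
        (1 / (8 * k) - 1 / (16 * k ^ 2) + 7 / (128 * k ^ 3)))
      =o[atTop] fun k : ℝ => 1 / k ^ 3 := by
  have hO : (fun k : ℝ => quadDegreeRatio k -
        (1 / (8 * k) - 1 / (16 * k ^ 2) + 7 / (128 * k ^ 3)))
      =O[atTop] fun k : ℝ => (1 / k ^ 3) * k⁻¹ := by
    refine IsBigO.of_bound (1 / 2) ?_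
    filter_upwards [eventually_ge_atTop (10 : ℝ)] with k hk
    have hk0 : 0 < k := by linarith
    have hx' : k⁻¹ ≤ 1 / 10 := by
      rw [one_div]
      exact inv_anti₀ (by norm_num) hk
    have hb := abs_sqrt_sub_taylor_le (inv_pos.mpr hk0) hx'
    rw [quadDegreeRatio_eq hk0]
    generalize √(2 - 10 * k⁻¹ - k⁻¹ ^ 2 + 2 * (1 + 2 * k⁻¹) * √(1 + 2 * k⁻¹)) = v at hb ⊢
    have e : k * (v / 2 - 1 + k⁻¹ / 2) - (1 / (8 * k) - 1 / (16 * k ^ 2) + 7 / (128 * k ^ 3)) =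
        k / 2 * (v - (2 - k⁻¹ + k⁻¹ ^ 2 / 4 - k⁻¹ ^ 3 / 8 + 7 / 64 * k⁻¹ ^ 4)) := by
      field_simp
      ring
    rw [e, Real.norm_eq_abs, abs_mul, abs_of_pos (half_pos hk0), Real.norm_of_nonneg (by positivity)]
    calc _ ≤ k / 2 * k⁻¹ ^ 5 := by gcongr
      _ = _ := by field_simp
  have ho : (fun k : ℝ => (1 / k ^ 3) * k⁻¹) =o[atTop] fun k : ℝ => 1 / k ^ 3 := by
    have h1 : (fun k : ℝ => k⁻¹) =o[atTop] fun _ : ℝ => (1 : ℝ) :=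
      (isLittleO_one_iff ℝ).mpr tendsto_inv_atTop_zero
    simpa only [mul_one] using (isBigO_refl (fun k : ℝ => 1 / k ^ 3) atTop).mul_isLittleO h1
  exact hO.trans_isLittleO ho
end

section
/- Define, for real k, D(k) = −k + 1/2 + (1/2)·√(2k² − 10k − 1 + 2(k+2)·√(k(k+2))). Then k·D(k) tends to 1/8 as k → ∞. -/
/-!
Put `x = 1/k` and `r = √(1 + 2x)`, so that `√(k(k+2)) = k r`. The outer radicand is
`(2k - 1)² + E`, where rationalizing
`E = 2(k+2)·√(k(k+2)) - 2(k² + 3k + 1)` gives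
`E = 2(1 + 2x - x²) / ((1 + 2x) r + 1 + 3x + x²)`, because
`(k+2)³k - (k² + 3k + 1)² = k² + 2k - 1`. Rationalizing `√((2k-1)² + E) - (2k-1)` in turn,
`k·D(k) = (E/2) / (√((2-x)² + x²E) + 2 - x)`. The right-hand side is continuous in `x` at `0`,
where `E = 1` and its value is `(1/2)/4 = 1/8`.
-/

open Filter

/-- The excess `E` of the outer radicand of `D(k)` over `(2k - 1)²`, in the variable `x = 1/k`. -/
noncomputable def radicandExcess (x : ℝ) : ℝ :=
  2 * (1 + 2 * x - x ^ 2) / ((1 + 2 * x) * Real.sqrt (1 + 2 * x) + (1 + 3 * x + x ^ 2))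

/-- `k·D(k)` in rationalized form, in the variable `x = 1/k`. -/
noncomputable def rationalizedRatio (x : ℝ) : ℝ :=
  radicandExcess x / 2 / (Real.sqrt ((2 - x) ^ 2 + x ^ 2 * radicandExcess x) + (2 - x))

lemma continuousAt_radicandExcess : ContinuousAt radicandExcess 0 := by
  unfold radicandExcess
  apply ContinuousAt.div
  · fun_prop
  · fun_prop
  · norm_num

lemma radicandExcess_zero : radicandExcess 0 = 1 := by
  norm_num [radicandExcess]

lemma rationalizedRatio_zero : rationalizedRatio 0 = 1 / 8 := by
  have h : Real.sqrt (2 ^ 2) = 2 := Real.sqrt_sq (by norm_num)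
  simp only [rationalizedRatio, radicandExcess_zero, sub_zero, mul_one, ne_eq,
    OfNat.ofNat_ne_zero, not_false_eq_true, zero_pow, add_zero, h]
  norm_num

lemma continuousAt_rationalizedRatio : ContinuousAt rationalizedRatio 0 := by
  have hE := continuousAt_radicandExcess
  unfold rationalizedRatio
  apply ContinuousAt.div
  · fun_prop
  · fun_prop
  · have := Real.sqrt_nonneg ((2 - (0 : ℝ)) ^ 2 + 0 ^ 2 * radicandExcess 0)
    linarith

lemma mul_quadDegreeRatio_inv {x : ℝ} (hx : 0 < x) (hx1 : x ≤ 1) :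
    x⁻¹ * quadDegreeRatio x⁻¹ = rationalizedRatio x := by
  have hk : 0 < x⁻¹ := inv_pos.2 hx
  have hr0 := Real.sqrt_nonneg (1 + 2 * x)
  have hr2 : Real.sqrt (1 + 2 * x) ^ 2 = 1 + 2 * x := Real.sq_sqrt (by linarith)
  have hs : Real.sqrt (x⁻¹ * (x⁻¹ + 2)) = x⁻¹ * Real.sqrt (1 + 2 * x) := by
    rw [show x⁻¹ * (x⁻¹ + 2) = x⁻¹ ^ 2 * (1 + 2 * x) by field_simp,
      Real.sqrt_mul (sq_nonneg _), Real.sqrt_sq hk.le]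
  have hden : 0 < (1 + 2 * x) * Real.sqrt (1 + 2 * x) + (1 + 3 * x + x ^ 2) := by positivity
  have hE0 : 0 ≤ radicandExcess x :=
    div_nonneg (by nlinarith) hden.le
  have hE : x ^ 2 * radicandExcess x =
      2 * ((1 + 2 * x) * Real.sqrt (1 + 2 * x) - (1 + 3 * x + x ^ 2)) := by
    rw [radicandExcess, mul_div_assoc', div_eq_iff hden.ne']
    linear_combination (-2 * (1 + 2 * x) ^ 2) * hr2
  have hA : 2 * x⁻¹ ^ 2 - 10 * x⁻¹ - 1 + 2 * (x⁻¹ + 2) * (x⁻¹ * Real.sqrt (1 + 2 * x)) =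
      x⁻¹ ^ 2 * ((2 - x) ^ 2 + x ^ 2 * radicandExcess x) := by
    rw [hE]
    field_simp
    ring
  have hS2 := Real.sq_sqrt (show 0 ≤ (2 - x) ^ 2 + x ^ 2 * radicandExcess x by positivity)
  have hS0 := Real.sqrt_nonneg ((2 - x) ^ 2 + x ^ 2 * radicandExcess x)
  rw [quadDegreeRatio, hs, hA, Real.sqrt_mul (sq_nonneg _), Real.sqrt_sq hk.le,
    rationalizedRatio, eq_div_iff (by linarith)]
  field_simp
  linear_combination hS2

/-- **Leading-order behaviour of `D(k)`:** `k·D(k) → 1/8` as `k → ∞`. -/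
theorem quadDegreeRatio_leading :
    Tendsto (fun k : ℝ => k * quadDegreeRatio k) atTop (nhds (1 / 8)) := by
  have h := continuousAt_rationalizedRatio.tendsto.comp (tendsto_inv_atTop_zero (𝕜 := ℝ))
  rw [rationalizedRatio_zero] at h
  refine h.congr' ?_
  filter_upwards [eventually_ge_atTop 1] with k hk
  have := mul_quadDegreeRatio_inv (inv_pos.2 (zero_lt_one.trans_le hk)) (inv_le_one_of_one_le₀ hk)
  rw [inv_inv] at this
  exact this.symm
end
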